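/- For every real number k, the Hessian determinant H_k of F_k vanishes at the point (k, k, 2(k - 1)). Moreover, if k > 1, then there exists a nonzero real number c such that ∇H_k(k, k, 2(k - 1)) = c·(k - 1, k - 1, -k); that is, the asymptote x + y = k/(k - 1) of the cubic (the tangent to F_k = 0 at the inflexion point (1, -1, 0)) is tangent to the Hessian curve H_k = 0 at the point R = (k/(2(k-1)), k/(2(k-1))) of the affine chart z = 1. -/

import Mathlib

noncomputable section

/-- The cubic form `F k (x,y,z) = -x^3 - y^3 - (z-x-y)^3 + 3k x y (z-x-y)`. -/
def F (k x y z : ℝ) : ℝ := -x^3 - y^3 - (z - x - y)^3 + 3*k*x*y*(z - x - y)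

/-- Partial derivative with respect to the first variable. -/
def pdx (f : ℝ → ℝ → ℝ → ℝ) (x y z : ℝ) : ℝ := deriv (fun t => f t y z) x

/-- Partial derivative with respect to the second variable. -/
def pdy (f : ℝ → ℝ → ℝ → ℝ) (x y z : ℝ) : ℝ := deriv (fun t => f x t z) y

/-- Partial derivative with respect to the third variable. -/
def pdz (f : ℝ → ℝ → ℝ → ℝ) (x y z : ℝ) : ℝ := deriv (fun t => f x y t) z

/-- The Hessian determinant of a function of three real variables: the determinant of
the 3×3 matrix of its second partial derivatives. -/
def hessDet (f : ℝ → ℝ → ℝ → ℝ) (x y z : ℝ) : ℝ :=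
  !![pdx (pdx f) x y z, pdy (pdx f) x y z, pdz (pdx f) x y z;
     pdx (pdy f) x y z, pdy (pdy f) x y z, pdz (pdy f) x y z;
     pdx (pdz f) x y z, pdy (pdz f) x y z, pdz (pdz f) x y z].det

/-- The gradient of a function of three real variables. -/
def grad (f : ℝ → ℝ → ℝ → ℝ) (x y z : ℝ) : ℝ × ℝ × ℝ :=
  (pdx f x y z, pdy f x y z, pdz f x y z)

/-- The dot product on `ℝ × ℝ × ℝ`. -/
def dot (a b : ℝ × ℝ × ℝ) : ℝ := a.1 * b.1 + a.2.1 * b.2.1 + a.2.2 * b.2.2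

theorem deriv_cubic_aux (f : ℝ → ℝ) (a b c d : ℝ) (h : ∀ t, f t = a + b*t + c*t^2 + d*t^3) (x : ℝ) :
    deriv f x = b + 2*c*x + 3*d*x^2 := by
  have hf : f = fun t => a + b*t + c*t^2 + d*t^3 := funext h
  rw [hf]
  have h1 := ((((hasDerivAt_id' x).const_mul b).const_add a).add
    ((hasDerivAt_pow 2 x).const_mul c)).add ((hasDerivAt_pow 3 x).const_mul d)
  have h2 : HasDerivAt (fun t : ℝ => a + b*t + c*t^2 + d*t^3) (b + 2*c*x + 3*d*x^2) x := by
    refine HasDerivAt.congr_deriv h1 ?_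
    norm_num
    ring
  exact h2.deriv

theorem pdx_F_aux (k : ℝ) : pdx (F k) =
    fun x y z => -3*x^2 + 3*(z-x-y)^2 + 3*k*y*(z-x-y) - 3*k*x*y := by
  funext x y z
  unfold pdx
  rw [deriv_cubic_aux _ (-y^3-(z-y)^3) (3*(z-y)^2+3*k*y*(z-y)) (-3*(z-y)-3*k*y) 0
    (fun t => by unfold F; ring)]
  ring

theorem pdy_F_aux (k : ℝ) : pdy (F k) =
    fun x y z => -3*y^2 + 3*(z-x-y)^2 + 3*k*x*(z-x-y) - 3*k*x*y := by
  funext x y z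
  unfold pdy
  rw [deriv_cubic_aux _ (-x^3-(z-x)^3) (3*(z-x)^2+3*k*x*(z-x)) (-3*(z-x)-3*k*x) 0
    (fun t => by unfold F; ring)]
  ring

theorem pdz_F_aux (k : ℝ) : pdz (F k) =
    fun x y z => -3*(z-x-y)^2 + 3*k*x*y := by
  funext x y z
  unfold pdz
  rw [deriv_cubic_aux _ (-x^3-y^3+(x+y)^3-3*k*x*y*(x+y)) (-3*(x+y)^2+3*k*x*y) (3*(x+y)) (-1)
    (fun t => by unfold F; ring)]
  ring

theorem hess_F_aux (k : ℝ) : hessDet (F k) = fun x y z =>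
    (54*k^3-216)*x*y*(z-x-y) + 54*k^2*(x^3+y^3+(z-x-y)^3) := by
  funext x y z
  have xx : pdx (pdx (F k)) x y z = -6*x-6*(z-x-y)-6*k*y := by
    rw [pdx_F_aux]; unfold pdx
    rw [deriv_cubic_aux _ (3*(z-y)^2+3*k*y*(z-y)) (-6*(z-y)-6*k*y) 0 0 (fun t => by ring)]
    ring
  have xy : pdy (pdx (F k)) x y z = -6*(z-x-y)+3*k*(z-x-y)-3*k*y-3*k*x := by
    rw [pdx_F_aux]; unfold pdy
    rw [deriv_cubic_aux _ (-3*x^2+3*(z-x)^2) (-6*(z-x)+3*k*(z-x)-3*k*x) (3-3*k) 0 (fun t => by ring)]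
    ring
  have xz : pdz (pdx (F k)) x y z = 6*(z-x-y)+3*k*y := by
    rw [pdx_F_aux]; unfold pdz
    rw [deriv_cubic_aux _ (-3*x^2+3*(x+y)^2-3*k*y*(x+y)-3*k*x*y) (-6*(x+y)+3*k*y) 3 0 (fun t => by ring)]
    ring
  have yx : pdx (pdy (F k)) x y z = -6*(z-x-y)+3*k*(z-x-y)-3*k*y-3*k*x := by
    rw [pdy_F_aux]; unfold pdx
    rw [deriv_cubic_aux _ (-3*y^2+3*(z-y)^2) (-6*(z-y)+3*k*(z-y)-3*k*y) (3-3*k) 0 (fun t => by ring)]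
    ring
  have yy : pdy (pdy (F k)) x y z = -6*y-6*(z-x-y)-6*k*x := by
    rw [pdy_F_aux]; unfold pdy
    rw [deriv_cubic_aux _ (3*(z-x)^2+3*k*x*(z-x)) (-6*(z-x)-6*k*x) 0 0 (fun t => by ring)]
    ring
  have yz : pdz (pdy (F k)) x y z = 6*(z-x-y)+3*k*x := by
    rw [pdy_F_aux]; unfold pdz
    rw [deriv_cubic_aux _ (-3*y^2+3*(x+y)^2-3*k*x*(x+y)-3*k*x*y) (-6*(x+y)+3*k*x) 3 0 (fun t => by ring)]
    ring
  have zx : pdx (pdz (F k)) x y z = 6*(z-x-y)+3*k*y := by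
    rw [pdz_F_aux]; unfold pdx
    rw [deriv_cubic_aux _ (-3*(z-y)^2) (6*(z-y)+3*k*y) (-3) 0 (fun t => by ring)]
    ring
  have zy : pdy (pdz (F k)) x y z = 6*(z-x-y)+3*k*x := by
    rw [pdz_F_aux]; unfold pdy
    rw [deriv_cubic_aux _ (-3*(z-x)^2) (6*(z-x)+3*k*x) (-3) 0 (fun t => by ring)]
    ring
  have zz : pdz (pdz (F k)) x y z = -6*(z-x-y) := by
    rw [pdz_F_aux]; unfold pdz
    rw [deriv_cubic_aux _ (-3*(x+y)^2+3*k*x*y) (6*(x+y)) (-3) 0 (fun t => by ring)]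
    ring
  unfold hessDet
  rw [xx, xy, xz, yx, yy, yz, zx, zy, zz, Matrix.det_fin_three]
  simp
  ring

theorem stmt_7 (k : ℝ) :
    hessDet (F k) k k (2*(k - 1)) = 0 ∧
    (k > 1 → ∃ c : ℝ, c ≠ 0 ∧
      grad (hessDet (F k)) k k (2*(k - 1)) = (c*(k - 1), c*(k - 1), c*(-k))) := by
  rw [hess_F_aux]
  refine ⟨by ring, fun hk => ⟨-(54*k*(k^3+8)), ?_, ?_⟩⟩
  · have : 0 < k := by linarith
    have : 0 < 54*k*(k^3+8) := by positivity
    linarith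
  · unfold grad
    refine Prod.ext ?_ (Prod.ext ?_ ?_)
    · dsimp only
      unfold pdx
      rw [deriv_cubic_aux _ (54*k^2*(k^3+(k-2)^3))
        ((54*k^3-216)*k*(k-2) - 54*k^2*3*(k-2)^2)
        (-(54*k^3-216)*k + 54*k^2*3*(k-2)) 0 (fun t => by ring)]
      ring
    · dsimp only
      unfold pdy
      rw [deriv_cubic_aux _ (54*k^2*(k^3+(k-2)^3))
        ((54*k^3-216)*k*(k-2) - 54*k^2*3*(k-2)^2)
        (-(54*k^3-216)*k + 54*k^2*3*(k-2)) 0 (fun t => by ring)]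
      ring
    · dsimp only
      unfold pdz
      rw [deriv_cubic_aux _ ((54*k^3-216)*k*k*(-2*k) + 54*k^2*(2*k^3-8*k^3))
        ((54*k^3-216)*k*k + 54*k^2*12*k^2) (-54*k^2*6*k) (54*k^2) (fun t => by ring)]
      ring
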